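/- Let X be a real Hilbert space, let J, J^δ : B_ρ(x*) → [0,∞) be Fréchet-differentiable with J(x*) = 0, ∇J Lipschitz with constant L < 1 on B_ρ(x*), and ‖∇J^δ(x) − ∇J(x)‖ ≤ δ for all x ∈ B_ρ(x*). Suppose J satisfies NC(0,β) for some β ∈ ℝ, and let x^δ_{k+1} = x^δ_k − ∇J^δ(x^δ_k) with x^δ_k ∈ B_ρ(x*). Then with e^δ_k = x^δ_k − x* and θ = 1 + 4β⁺: ‖e^δ_{k+1}‖² ≤ ‖e^δ_k‖² + θ‖∇J^δ(x^δ_k)‖² + 2δ‖e^δ_k‖ + 4β⁺δ². -/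

import Mathlib

open scoped RealInnerProductSpace
open Metric

/-- (Recursive error estimate for the noisy iteration.) Under the
standing assumptions, `‖∇J^δ(x) - ∇J(x)‖ ≤ δ` on `B_ρ(x*)` and condition NC(0,β), if
`x^δ_k ∈ B_ρ(x*)`, then with `θ = 1 + 4β⁺`:
`‖e^δ_{k+1}‖² ≤ ‖e^δ_k‖² + θ‖∇J^δ(x^δ_k)‖² + 2δ‖e^δ_k‖ + 4β⁺δ²`. -/
theorem noisy_gradient_descent_recursive_estimate
    {X : Type*} [NormedAddCommGroup X] [InnerProductSpace ℝ X] [CompleteSpace X]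
    (xs : X) (ρ : ℝ) (hρ : 0 < ρ)
    (J : X → ℝ) (J' : X → X) (Jd : X → ℝ) (Jd' : X → X) (δ : ℝ)
    (hJnn : ∀ x ∈ closedBall xs ρ, 0 ≤ J x)
    (hJdnn : ∀ x ∈ closedBall xs ρ, 0 ≤ Jd x)
    (hJxs : J xs = 0)
    (hgrad : ∀ x ∈ closedBall xs ρ, HasGradientAt J (J' x) x)
    (hgradd : ∀ x ∈ closedBall xs ρ, HasGradientAt Jd (Jd' x) x)
    (L : ℝ) (hL0 : 0 ≤ L) (hL1 : L < 1)
    (hLip : ∀ x₁ ∈ closedBall xs ρ, ∀ x₂ ∈ closedBall xs ρ,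
      ‖J' x₁ - J' x₂‖ ≤ L * ‖x₁ - x₂‖)
    (happrox : ∀ x ∈ closedBall xs ρ, ‖Jd' x - J' x‖ ≤ δ)
    (β : ℝ)
    (hNC : ∀ x₁ ∈ closedBall xs ρ, ∀ x₂ ∈ closedBall xs ρ,
      J x₁ ≤ 0 * J x₂ → ⟪J' x₂, x₂ - x₁⟫ ≥ -β * ‖J' x₂‖ ^ 2)
    (xd : ℕ → X) (hxd : ∀ k, xd (k + 1) = xd k - Jd' (xd k))
    (k : ℕ) (hk : xd k ∈ closedBall xs ρ) :
    ‖xd (k + 1) - xs‖ ^ 2 ≤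
      ‖xd k - xs‖ ^ 2 + (1 + 4 * max β 0) * ‖Jd' (xd k)‖ ^ 2 +
        2 * δ * ‖xd k - xs‖ + 4 * max β 0 * δ ^ 2 := by
  have hxs : xs ∈ closedBall xs ρ := mem_closedBall_self hρ.le
  have h1 := hNC xs hxs (xd k) hk (by simp [hJxs])
  have h2 := happrox (xd k) hk
  have hstep : xd (k + 1) - xs = (xd k - xs) - Jd' (xd k) := by
    rw [hxd]; abel
  rw [hstep, norm_sub_sq_real, real_inner_comm]
  generalize xd k - xs = e at *
  generalize Jd' (xd k) = g at *
  generalize J' (xd k) = p at *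
  have h3 : -(δ * ‖e‖) ≤ ⟪g - p, e⟫ := by
    have ha := neg_le_of_abs_le (abs_real_inner_le_norm (g - p) e)
    have hb := mul_le_mul_of_nonneg_right h2 (norm_nonneg e)
    linarith
  rw [inner_sub_left] at h3
  have h4 : ‖p‖ ≤ ‖g‖ + δ := by
    have ha := norm_sub_norm_le p g
    rw [norm_sub_rev] at ha
    linarith
  have h5 : ‖p‖ ^ 2 ≤ 2 * ‖g‖ ^ 2 + 2 * δ ^ 2 := by
    have ha := pow_le_pow_left₀ (norm_nonneg p) h4 2
    nlinarith [sq_nonneg (‖g‖ - δ)]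
  have h6 : β * ‖p‖ ^ 2 ≤ max β 0 * ‖p‖ ^ 2 :=
    mul_le_mul_of_nonneg_right (le_max_left _ _) (sq_nonneg _)
  have h7 := mul_le_mul_of_nonneg_left h5 (le_max_right β 0)
  linarith
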